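/- arXiv:math/0607669 — 10 statements merged into one kernel-verified Lean document; each statement's English description precedes it below -/
import Mathlib

section
/- Let 0 → W → V → V/W → 0 be a short exact sequence of finite-dimensional vector spaces over a field, and let U_1, …, U_s be linear subspaces of V. Set S_i := W ∩ U_i and let M_i denote the image (U_i + W)/W of U_i in V/W, for i = 1, …, s. If S_1, …, S_s meet transversally in W, then U_1, …, U_s meet transversally in V if and only if M_1, …, M_s meet transversally in V/W. -/
/-- A family of subspaces of `M` *meets transversally* if their annihilators in the dual
space form a direct sum (are independent subspaces of `Module.Dual K M`). -/
def MeetsTransversally {K : Type*} [Field K] {M : Type*} [AddCommGroup M] [Module K M]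
    {ι : Type*} (U : ι → Submodule K M) : Prop :=
  iSupIndep fun i => (U i).dualAnnihilator

/-- If the subspaces `S_i = W ∩ U_i` meet transversally in `W`, then
`U_1, …, U_s` meet transversally in `V` if and only if the images `M_i = (U_i + W)/W`
meet transversally in `V/W`. -/
theorem meetsTransversally_iff_map_of_inter_meetsTransversally
    {K V : Type*} [Field K] [AddCommGroup V] [Module K V] [FiniteDimensional K V]
    (W : Submodule K V) {s : ℕ} (U : Fin s → Submodule K V)
    (hS : MeetsTransversally (fun i => (U i).comap W.subtype)) :
    MeetsTransversally U ↔ MeetsTransversally (fun i => (U i).map W.mkQ) := by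
  unfold MeetsTransversally at *
  rw [iSupIndep_iff_finsetSum_eq_zero_imp_eq_zero] at hS
  rw [iSupIndep_iff_finsetSum_eq_zero_imp_eq_zero, iSupIndep_iff_finsetSum_eq_zero_imp_eq_zero]
  constructor
  · intro h t f hf h0 i hi
    have key := h t (fun i => (f i).comp W.mkQ) ?_ ?_ i hi
    · ext x
      simpa using LinearMap.congr_fun key x
    · intro j hj
      rw [Submodule.mem_dualAnnihilator]
      intro w hw
      exact (Submodule.mem_dualAnnihilator _).1 (hf j hj) _ (Submodule.mem_map_of_mem hw)
    · ext x
      simpa using LinearMap.congr_fun h0 (W.mkQ x)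
  · intro h t f hf h0 i hi
    have hW : ∀ j ∈ t, W ≤ LinearMap.ker (f j) := by
      intro j hj w hw
      have key := hS t (fun i => (f i).comp W.subtype) ?_ ?_ j hj
      · exact LinearMap.congr_fun key ⟨w, hw⟩
      · intro k hk
        rw [Submodule.mem_dualAnnihilator]
        intro w hw
        exact (Submodule.mem_dualAnnihilator _).1 (hf k hk) _ hw
      · ext x
        simpa using LinearMap.congr_fun h0 (x : V)
    classical
    let g : Fin s → Module.Dual K (V ⧸ W) := fun j =>
      if hj : j ∈ t then W.liftQ (f j) (hW j hj) else 0
    have hg : ∀ j ∈ t, ∀ x, g j (W.mkQ x) = f j x := by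
      intro j hj x
      simp [g, hj]
    have key := h t g ?_ ?_ i hi
    · ext x
      rw [← hg i hi x, key]
      rfl
    · intro j hj
      rw [Submodule.mem_dualAnnihilator]
      rintro _ ⟨w, hw, rfl⟩
      rw [hg j hj]
      exact (Submodule.mem_dualAnnihilator _).1 (hf j hj) _ hw
    · ext x
      have h1 := LinearMap.congr_fun h0 x
      rw [LinearMap.sum_apply] at h1
      rw [LinearMap.comp_apply, LinearMap.sum_apply, Finset.sum_congr rfl (fun j hj => hg j hj x), h1]
      rfl
end

section
/- For any two roots β_1, β_2 ∈ Φ(g/p), one has ⟨β_1, β_2⟩ ≥ 0. -/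
open scoped RealInnerProductSpace

/-- The Cartan pairing `⟨β, γ⟩ = 2(β,γ)/(γ,γ)`. -/
noncomputable def rpair {V : Type*} [NormedAddCommGroup V] [InnerProductSpace ℝ V]
    (β γ : V) : ℝ := 2 * ⟪β, γ⟫ / ⟪γ, γ⟫

/-- An irreducible reduced crystallographic root system in a real inner product space,
equipped with a base `Δ` of simple roots, the coefficient function `m` (so that
`β = ∑_{δ ∈ Δ} m β δ • δ` for roots `β`) and the highest root `θ`. -/
structure IrredRootSystem (V : Type*) [NormedAddCommGroup V] [InnerProductSpace ℝ V] where
  Φ : Set V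
  Δ : Finset V
  m : V → V → ℤ
  θ : V
  finite : Φ.Finite
  zero_notMem : (0 : V) ∉ Φ
  spans : Submodule.span ℝ Φ = ⊤
  neg_mem : ∀ β ∈ Φ, -β ∈ Φ
  reflect_mem : ∀ β ∈ Φ, ∀ γ ∈ Φ, β - rpair β γ • γ ∈ Φ
  crystallographic : ∀ β ∈ Φ, ∀ γ ∈ Φ, ∃ z : ℤ, rpair β γ = z
  reduced : ∀ β ∈ Φ, ∀ t : ℝ, t • β ∈ Φ → t = 1 ∨ t = -1
  irreducible : ¬ ∃ A B : Set V, A.Nonempty ∧ B.Nonempty ∧ Disjoint A B ∧ A ∪ B = Φ ∧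
      ∀ β ∈ A, ∀ γ ∈ B, ⟪β, γ⟫ = 0
  base_subset : ↑Δ ⊆ Φ
  base_indep : LinearIndependent ℝ (fun δ : Δ => (δ : V))
  base_repr : ∀ β ∈ Φ, β = ∑ δ ∈ Δ, (m β δ : ℝ) • δ
  base_sign : ∀ β ∈ Φ, (∀ δ ∈ Δ, 0 ≤ m β δ) ∨ (∀ δ ∈ Δ, m β δ ≤ 0)
  theta_mem : θ ∈ Φ
  theta_highest : ∀ β ∈ Φ, ∀ δ ∈ Δ, m β δ ≤ m θ δ

namespace IrredRootSystem

variable {V : Type*} [NormedAddCommGroup V] [InnerProductSpace ℝ V]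

/-- The positive roots `Φ⁺`. -/
def Pos (D : IrredRootSystem V) : Set V := {β | β ∈ D.Φ ∧ ∀ δ ∈ D.Δ, 0 ≤ D.m β δ}

/-- The negative roots `Φ⁻`. -/
def Neg (D : IrredRootSystem V) : Set V := {β | β ∈ D.Φ ∧ ∀ δ ∈ D.Δ, D.m β δ ≤ 0}

/-- A long root: a root of maximal squared length. -/
def IsLong (D : IrredRootSystem V) (β : V) : Prop :=
  β ∈ D.Φ ∧ ∀ γ ∈ D.Φ, ⟪γ, γ⟫ ≤ ⟪β, β⟫

/-- `Φ(g/p)`: the roots whose coefficient on the cominuscule simple root `α` is `1`. -/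
def gp (D : IrredRootSystem V) (α : V) : Set V := {β | β ∈ D.Φ ∧ D.m β α = 1}

/-- An orthogonal sequence of long roots in `Φ(g/p)`. -/
def IsOrthLongSeq (D : IrredRootSystem V) (α : V) {r : ℕ} (a : Fin r → V) : Prop :=
  (∀ i, D.IsLong (a i)) ∧ (∀ i, a i ∈ D.gp α) ∧ ∀ i j, i ≠ j → ⟪a i, a j⟫ = 0

end IrredRootSystem

/-- In a cominuscule situation (the simple root `α` has coefficient 1 in the
highest root), any two roots of `Φ(g/p)` pair nonnegatively. -/
theorem cominuscule_pairing_nonneg {V : Type*} [NormedAddCommGroup V] [InnerProductSpace ℝ V]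
    (D : IrredRootSystem V) (α : V) (hα : α ∈ D.Δ) (hcom : D.m D.θ α = 1)
    (β₁ β₂ : V) (h₁ : β₁ ∈ D.gp α) (h₂ : β₂ ∈ D.gp α) :
    0 ≤ rpair β₁ β₂ := by
  obtain ⟨hΦ₁, hm₁⟩ := h₁
  obtain ⟨hΦ₂, hm₂⟩ := h₂
  obtain ⟨z, hz⟩ := D.crystallographic β₁ hΦ₁ β₂ hΦ₂
  have hr := D.reflect_mem β₁ hΦ₁ β₂ hΦ₂
  rw [hz] at hr ⊢
  set γ := β₁ - (z : ℝ) • β₂ with hγ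
  have hle := D.theta_highest γ hr α hα
  have hsum : ∑ δ ∈ D.Δ, ((D.m γ δ : ℝ) - ((D.m β₁ δ : ℝ) - z * (D.m β₂ δ : ℝ))) • δ = 0 := by
    simp only [sub_smul, Finset.sum_sub_distrib, mul_smul, ← Finset.smul_sum]
    rw [← D.base_repr γ hr, ← D.base_repr β₁ hΦ₁, ← D.base_repr β₂ hΦ₂, hγ, sub_self]
  have hli := linearIndependent_iff'.1 D.base_indep Finset.univ
    (fun δ => (D.m γ δ : ℝ) - ((D.m β₁ δ : ℝ) - z * (D.m β₂ δ : ℝ)))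
    (by rw [← hsum, ← Finset.sum_coe_sort D.Δ]) ⟨α, hα⟩ (Finset.mem_univ _)
  simp only [hm₁, hm₂] at hli
  rw [hcom] at hle
  have : (D.m γ α : ℝ) ≤ 1 := by exact_mod_cast hle
  push_cast at hli
  linarith
end

section
/- Let Ψ be a proper subset of Δ and set N := {β ∈ Φ⁺ : m_δ(β) ≥ 1 for some δ ∈ Δ∖Ψ} (the roots of g/k for the standard parabolic subgroup K defined by Ψ). If it is not the case that Δ∖Ψ consists of a single simple root α with m_α(θ) = 1 (i.e., if G/K is not a cominuscule flag variety), then there exist β_1, β_2 ∈ N such that β_1 + β_2 ∈ Φ. -/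
open scoped RealInnerProductSpace

theorem aux_coeff {V : Type*} [NormedAddCommGroup V] [InnerProductSpace ℝ V]
    (D : IrredRootSystem V) (f g : V → ℝ)
    (h : ∑ δ ∈ D.Δ, f δ • δ = ∑ δ ∈ D.Δ, g δ • δ) : ∀ δ ∈ D.Δ, f δ = g δ := by
  have hi := Fintype.linearIndependent_iff.1 D.base_indep (fun δ => f δ - g δ) (by
    have h2 : ∑ δ ∈ D.Δ, (f δ - g δ) • δ = 0 := by
      simp only [sub_smul, Finset.sum_sub_distrib, h, sub_self]
    rw [← h2]
    exact Finset.sum_coe_sort D.Δ (fun δ => (f δ - g δ) • δ))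
  intro δ hδ
  have := hi ⟨δ, hδ⟩
  try simp only at this
  linarith

theorem aux_m_sub {V : Type*} [NormedAddCommGroup V] [InnerProductSpace ℝ V]
    (D : IrredRootSystem V) (β γ : V) (hβ : β ∈ D.Φ) (hγ : γ ∈ D.Φ) (hs : β - γ ∈ D.Φ) :
    ∀ δ ∈ D.Δ, D.m (β - γ) δ = D.m β δ - D.m γ δ := by
  intro δ hδ
  have := aux_coeff D (fun δ => (D.m (β - γ) δ : ℝ)) (fun δ => (D.m β δ : ℝ) - D.m γ δ) (by
    simp only [sub_smul, Finset.sum_sub_distrib]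
    rw [← D.base_repr _ hs, ← D.base_repr _ hβ, ← D.base_repr _ hγ]) δ hδ
  try simp only at this
  exact_mod_cast this

open Classical in
theorem aux_m_simple {V : Type*} [NormedAddCommGroup V] [InnerProductSpace ℝ V]
    (D : IrredRootSystem V) (γ : V) (hγ : γ ∈ D.Δ) :
    ∀ δ ∈ D.Δ, D.m γ δ = if δ = γ then 1 else 0 := by
  intro δ hδ
  have := aux_coeff D (fun δ => (D.m γ δ : ℝ)) (fun δ => if δ = γ then 1 else 0) (by
    rw [← D.base_repr _ (D.base_subset hγ)]
    simp [hγ]) δ hδ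
  try simp only at this
  split_ifs at this ⊢ <;> exact_mod_cast this

theorem aux_sub_mem {V : Type*} [NormedAddCommGroup V] [InnerProductSpace ℝ V]
    (D : IrredRootSystem V) (β γ : V) (hβ : β ∈ D.Φ) (hγ : γ ∈ D.Φ) (hne : β ≠ γ)
    (hpos : 0 < ⟪β, γ⟫) : β - γ ∈ D.Φ := by
  have hβ0 : β ≠ 0 := fun h => D.zero_notMem (h ▸ hβ)
  have hγ0 : γ ≠ 0 := fun h => D.zero_notMem (h ▸ hγ)
  have hbb : 0 < ⟪β, β⟫ := real_inner_self_pos.2 hβ0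
  have hgg : 0 < ⟪γ, γ⟫ := real_inner_self_pos.2 hγ0
  have hsymm : ⟪γ, β⟫ = ⟪β, γ⟫ := real_inner_comm _ _
  -- strict Cauchy-Schwarz
  have hcs : ⟪β, γ⟫ * ⟪β, γ⟫ < ⟪β, β⟫ * ⟪γ, γ⟫ := by
    have hw : ⟪γ, γ⟫ • β - ⟪β, γ⟫ • γ ≠ 0 := by
      intro h
      have h1 : β = (⟪β, γ⟫ / ⟪γ, γ⟫) • γ := by
        rw [div_eq_inv_mul, mul_smul, ← sub_eq_zero.1 h, smul_smul,
          inv_mul_cancel₀ hgg.ne', one_smul]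
      rcases D.reduced γ hγ _ (h1 ▸ hβ) with h2 | h2
      · rw [h2, one_smul] at h1; exact hne h1
      · have : 0 < ⟪β, γ⟫ / ⟪γ, γ⟫ := div_pos hpos hgg
        linarith
    have := real_inner_self_pos.2 hw
    simp only [inner_sub_left, inner_sub_right, real_inner_smul_left, real_inner_smul_right,
      hsymm] at this
    have h3 : 0 < ⟪γ, γ⟫ * (⟪β, β⟫ * ⟪γ, γ⟫ - ⟪β, γ⟫ * ⟪β, γ⟫) := by linarith
    have := pos_of_mul_pos_right h3 hgg.le
    linarith
  obtain ⟨a, ha⟩ := D.crystallographic β hβ γ hγ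
  obtain ⟨b, hb⟩ := D.crystallographic γ hγ β hβ
  have ha0 : 0 < a := by
    have : (0:ℝ) < a := by rw [← ha]; unfold rpair; positivity
    exact_mod_cast this
  have hb0 : 0 < b := by
    have : (0:ℝ) < b := by rw [← hb]; unfold rpair; rw [hsymm]; positivity
    exact_mod_cast this
  have hab : a * b < 4 := by
    have : (a:ℝ) * b < 4 := by
      rw [← ha, ← hb]; unfold rpair; rw [hsymm, div_mul_div_comm, div_lt_iff₀ (by positivity)]
      linarith
    exact_mod_cast this
  have : a = 1 ∨ b = 1 := by
    by_contra! h
    have h1 : 2 ≤ a := by have := h.1; omega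
    have h2 : 2 ≤ b := by have := h.2; omega
    nlinarith
  rcases this with h | h
  · have := D.reflect_mem β hβ γ hγ
    rw [ha, h] at this
    simpa using this
  · have := D.neg_mem _ (D.reflect_mem γ hγ β hβ)
    rw [hb, h] at this
    simpa using this

theorem aux_exists_simple {V : Type*} [NormedAddCommGroup V] [InnerProductSpace ℝ V]
    (D : IrredRootSystem V) (β : V) (hβ : β ∈ D.Pos) : ∃ δ ∈ D.Δ, 0 < ⟪β, δ⟫ := by
  by_contra! h
  have hβ0 : β ≠ 0 := fun h => D.zero_notMem (h ▸ hβ.1)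
  have hbb : 0 < ⟪β, β⟫ := real_inner_self_pos.2 hβ0
  have h1 : ⟪β, β⟫ = ∑ δ ∈ D.Δ, (D.m β δ : ℝ) * ⟪β, δ⟫ := by
    conv_lhs => rw [D.base_repr β hβ.1]
    rw [← D.base_repr β hβ.1]
    conv_lhs => arg 3; rw [D.base_repr β hβ.1]
    rw [inner_sum]
    simp only [real_inner_smul_right]
  have h2 : ∑ δ ∈ D.Δ, (D.m β δ : ℝ) * ⟪β, δ⟫ ≤ 0 :=
    Finset.sum_nonpos fun δ hδ =>
      mul_nonpos_of_nonneg_of_nonpos (by exact_mod_cast hβ.2 δ hδ) (h δ hδ)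
  linarith

theorem aux_mem {V : Type*} [NormedAddCommGroup V] [InnerProductSpace ℝ V]
    (D : IrredRootSystem V) (S : Finset V) (hS : S ⊆ D.Δ) (β : V) (hβ : β ∈ D.Φ)
    (h : 1 ≤ ∑ δ ∈ S, D.m β δ) : β ∈ D.Pos ∧ ∃ δ ∈ S, 1 ≤ D.m β δ := by
  have h1 : ∃ δ ∈ S, 1 ≤ D.m β δ := by
    by_contra! h2
    have : ∑ δ ∈ S, D.m β δ ≤ 0 := Finset.sum_nonpos fun δ hδ => by
      have := h2 δ hδ; omega
    omega
  refine ⟨⟨hβ, ?_⟩, h1⟩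
  obtain ⟨δ, hδ, h3⟩ := h1
  rcases D.base_sign β hβ with h4 | h4
  · exact h4
  · have := h4 δ (hS hδ); omega

open Classical in
theorem aux_main {V : Type*} [NormedAddCommGroup V] [InnerProductSpace ℝ V]
    (D : IrredRootSystem V) (S : Finset V) (hS : S ⊆ D.Δ) (n : ℕ) :
    ∀ β ∈ D.Φ, 2 ≤ ∑ δ ∈ S, D.m β δ → ∑ δ ∈ D.Δ, D.m β δ ≤ n →
    ∃ β₁ ∈ D.Φ, ∃ β₂ ∈ D.Φ, 1 ≤ ∑ δ ∈ S, D.m β₁ δ ∧ 1 ≤ ∑ δ ∈ S, D.m β₂ δ ∧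
      β₁ + β₂ ∈ D.Φ := by
  induction n with
  | zero =>
    intro β hβ h2 hn
    have hp := (aux_mem D S hS β hβ (by omega)).1
    have := Finset.sum_le_sum_of_subset_of_nonneg (f := D.m β) hS (fun i hi _ => hp.2 i hi)
    push_cast at hn
    omega
  | succ n ih =>
    intro β hβ h2 hn
    have hp := (aux_mem D S hS β hβ (by omega)).1
    obtain ⟨γ, hγ, hpos⟩ := aux_exists_simple D β hp
    have hγΦ := D.base_subset hγ
    have hsum : ∀ T ⊆ D.Δ, ∑ δ ∈ T, D.m γ δ = if γ ∈ T then 1 else 0 := by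
      intro T hT
      rw [Finset.sum_congr rfl (fun δ hδ => aux_m_simple D γ hγ δ (hT hδ))]
      simp
    have hne : β ≠ γ := by
      rintro rfl
      rw [hsum S hS] at h2
      split_ifs at h2 <;> omega
    have hs := aux_sub_mem D β γ hβ hγΦ hne hpos
    have hsub : ∀ T ⊆ D.Δ, ∑ δ ∈ T, D.m (β - γ) δ =
        ∑ δ ∈ T, D.m β δ - if γ ∈ T then 1 else 0 := by
      intro T hT
      rw [Finset.sum_congr rfl (fun δ hδ => aux_m_sub D β γ hβ hγΦ hs δ (hT hδ)),
        Finset.sum_sub_distrib, hsum T hT]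
    by_cases hγS : γ ∈ S
    · refine ⟨β - γ, hs, γ, hγΦ, ?_, ?_, by simpa using hβ⟩
      · rw [hsub S hS, if_pos hγS]; omega
      · rw [hsum S hS, if_pos hγS]
    · apply ih (β - γ) hs
      · rw [hsub S hS, if_neg hγS]; omega
      · rw [hsub _ subset_rfl, if_pos hγ]; push_cast at hn; omega

/-- If the standard parabolic determined by `Ψ ⊊ Δ` is not cominuscule, then
among the roots of `g/k` there are two whose sum is again a root. -/
theorem noncominuscule_exists_sum_root {V : Type*} [NormedAddCommGroup V]
    [InnerProductSpace ℝ V] (D : IrredRootSystem V)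
    (Ψ : Finset V) (hΨ : Ψ ⊆ D.Δ) (hproper : Ψ ≠ D.Δ)
    (hnotcom : ¬ ∃ α ∈ D.Δ, (↑D.Δ : Set V) \ ↑Ψ = {α} ∧ D.m D.θ α = 1) :
    ∃ β₁ ∈ {β | β ∈ D.Pos ∧ ∃ δ ∈ D.Δ, δ ∉ Ψ ∧ 1 ≤ D.m β δ},
    ∃ β₂ ∈ {β | β ∈ D.Pos ∧ ∃ δ ∈ D.Δ, δ ∉ Ψ ∧ 1 ≤ D.m β δ},
      β₁ + β₂ ∈ D.Φ := by
  classical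
  have hS : D.Δ \ Ψ ⊆ D.Δ := Finset.sdiff_subset
  have hone : ∀ δ ∈ D.Δ, 1 ≤ D.m D.θ δ := by
    intro δ hδ
    have h1 := D.theta_highest δ (D.base_subset hδ) δ hδ
    rw [aux_m_simple D δ hδ δ hδ, if_pos rfl] at h1
    exact h1
  have hne : (D.Δ \ Ψ).Nonempty := by
    rw [Finset.sdiff_nonempty]
    exact fun h => hproper (Finset.Subset.antisymm hΨ h)
  have h2 : 2 ≤ ∑ δ ∈ D.Δ \ Ψ, D.m D.θ δ := by
    by_contra! hlt
    have hcard : ((D.Δ \ Ψ).card : ℤ) ≤ ∑ δ ∈ D.Δ \ Ψ, D.m D.θ δ := by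
      have := Finset.sum_le_sum (s := D.Δ \ Ψ) (f := fun _ => (1 : ℤ)) (g := D.m D.θ)
        (fun δ hδ => hone δ (hS hδ))
      simpa using this
    have hc := hne.card_pos
    have hc1 : (D.Δ \ Ψ).card = 1 := by omega
    obtain ⟨α, hα⟩ := Finset.card_eq_one.1 hc1
    have hαΔ : α ∈ D.Δ := hS (by rw [hα]; simp)
    refine hnotcom ⟨α, hαΔ, ?_, ?_⟩
    · rw [← Finset.coe_sdiff, hα, Finset.coe_singleton]
    · rw [hα, Finset.sum_singleton] at hlt
      have := hone α hαΔ
      omega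
  obtain ⟨β₁, h₁, β₂, h₂, hs₁, hs₂, hsum⟩ :=
    aux_main D _ hS (∑ δ ∈ D.Δ, D.m D.θ δ).toNat D.θ D.theta_mem h2 (Int.self_le_toNat _)
  have key : ∀ β ∈ D.Φ, 1 ≤ ∑ δ ∈ D.Δ \ Ψ, D.m β δ →
      β ∈ {β | β ∈ D.Pos ∧ ∃ δ ∈ D.Δ, δ ∉ Ψ ∧ 1 ≤ D.m β δ} := by
    intro β hβ h
    obtain ⟨hp, δ, hδ, hm⟩ := aux_mem D _ hS β hβ h
    rw [Finset.mem_sdiff] at hδ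
    exact ⟨hp, δ, hδ.1, hδ.2, hm⟩
  exact ⟨β₁, key β₁ h₁ hs₁, β₂, key β₂ h₂ hs₂, hsum⟩
end

section
/- Let α_1, …, α_r be an orthogonal sequence of long roots in Φ(g/p). Then for every root γ ∈ Φ with m_α(γ) = 0 there is at most one index i ∈ {1, …, r} such that ⟨γ, α_i⟩ = −1. -/
open scoped RealInnerProductSpace

/-- For an orthogonal sequence of long roots in `Φ(g/p)` and a root `γ`
with `m_α(γ) = 0`, there is at most one index `i` with `⟨γ, α_i⟩ = -1`. -/
theorem at_most_one_pairing_neg_one {V : Type*} [NormedAddCommGroup V]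
    [InnerProductSpace ℝ V] (D : IrredRootSystem V)
    (α : V) (hα : α ∈ D.Δ) (hcom : D.m D.θ α = 1)
    {r : ℕ} (a : Fin r → V) (ha : D.IsOrthLongSeq α a)
    (γ : V) (hγ : γ ∈ D.Φ) (hγα : D.m γ α = 0) :
    ∀ i j : Fin r, rpair γ (a i) = -1 → rpair γ (a j) = -1 → i = j := by
  intro i j hi hj
  by_contra hij
  obtain ⟨_, hgp, horth⟩ := ha
  have hi1 := D.reflect_mem γ hγ (a i) (hgp i).1
  rw [hi, neg_one_smul, sub_neg_eq_add] at hi1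
  have hp : rpair (γ + a i) (a j) = -1 := by
    rw [← hj]
    simp only [rpair, inner_add_left, horth i j hij, add_zero]
  have hi2 := D.reflect_mem _ hi1 (a j) (hgp j).1
  rw [hp, neg_one_smul, sub_neg_eq_add] at hi2
  have hs : ∑ δ ∈ D.Δ, ((D.m (γ + a i + a j) δ : ℝ) - D.m γ δ - D.m (a i) δ
      - D.m (a j) δ) • δ = 0 := by
    simp only [sub_smul, Finset.sum_sub_distrib]
    rw [← D.base_repr _ hi2, ← D.base_repr _ hγ, ← D.base_repr _ (hgp i).1,
      ← D.base_repr _ (hgp j).1]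
    abel
  rw [← Finset.sum_coe_sort] at hs
  have h0 := Fintype.linearIndependent_iff.1 D.base_indep
    (fun δ => (D.m (γ + a i + a j) δ : ℝ) - D.m γ δ - D.m (a i) δ - D.m (a j) δ) hs ⟨α, hα⟩
  have hm := D.theta_highest _ hi2 α hα
  simp only [hγα, (hgp i).2, (hgp j).2] at h0
  rw [hcom] at hm
  have : (D.m (γ + a i + a j) α : ℝ) ≤ 1 := by exact_mod_cast hm
  push_cast at h0
  linarith
end

section
/- Let α_1, …, α_r be an orthogonal sequence of long roots in Φ(g/p). Then for every β ∈ Φ(g/p) there are at most two distinct indices i ∈ {1, …, r} such that ⟨β, α_i⟩ ≥ 1. -/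
open scoped RealInnerProductSpace

/-- For an orthogonal sequence of long roots in `Φ(g/p)` and any
`β ∈ Φ(g/p)`, there are at most two indices `i` with `⟨β, α_i⟩ ≥ 1`. -/
theorem at_most_two_pairing_pos {V : Type*} [NormedAddCommGroup V]
    [InnerProductSpace ℝ V] (D : IrredRootSystem V)
    (α : V) (hα : α ∈ D.Δ) (hcom : D.m D.θ α = 1)
    {r : ℕ} (a : Fin r → V) (ha : D.IsOrthLongSeq α a)
    (β : V) (hβ : β ∈ D.gp α) :
    {i : Fin r | 1 ≤ rpair β (a i)}.ncard ≤ 2 := by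
  have key : ∃ f : V →ₗ[ℝ] ℝ, ∀ γ ∈ D.Φ, f γ = (D.m γ α : ℝ) := by
    classical
    obtain ⟨f, hf⟩ := LinearMap.exists_extend
      ((Finsupp.lapply (⟨α, hα⟩ : D.Δ) : (D.Δ →₀ ℝ) →ₗ[ℝ] ℝ).comp
        (D.base_indep.repr : _ →ₗ[ℝ] (D.Δ →₀ ℝ)))
    have hd : ∀ δ : D.Δ, f (δ : V) = if δ = ⟨α, hα⟩ then 1 else 0 := by
      intro δ
      have h := LinearMap.congr_fun hf
        ⟨(δ : V), Submodule.subset_span (Set.mem_range_self δ)⟩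
      have h2 := D.base_indep.repr_eq_single δ
        ⟨(δ : V), Submodule.subset_span (Set.mem_range_self δ)⟩ rfl
      simp only [LinearMap.comp_apply, Submodule.subtype_apply, LinearEquiv.coe_coe, h2] at h
      rw [h]
      simp [Finsupp.single_apply]
    refine ⟨f, fun γ hγ => ?_⟩
    conv_lhs => rw [D.base_repr γ hγ]
    rw [map_sum, Finset.sum_eq_single α]
    · have := hd ⟨α, hα⟩
      simp only [if_true] at this
      simp [this]
    · intro b hb hne
      have := hd ⟨b, hb⟩
      simp only [Subtype.mk.injEq, hne, if_false] at this
      simp [this]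
    · exact fun h => absurd hα h
  obtain ⟨f, hf⟩ := key
  have hlow : ∀ γ ∈ D.Φ, -1 ≤ f γ := by
    intro γ hγ
    have h1 := hf _ (D.neg_mem γ hγ)
    have h2 := D.theta_highest _ (D.neg_mem γ hγ) α hα
    rw [hcom] at h2
    have h3 : (D.m (-γ) α : ℝ) ≤ 1 := by exact_mod_cast h2
    rw [map_neg] at h1
    linarith
  obtain ⟨hl, hg, ho⟩ := ha
  have hfa : ∀ i, f (a i) = 1 := fun i => by rw [hf _ (hg i).1, (hg i).2]; simp
  have hstep : ∀ (γ : V) (t : ℝ) (i j : Fin r), i ≠ j →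
      rpair (γ - t • a i) (a j) = rpair γ (a j) := by
    intro γ t i j hij
    simp [rpair, inner_sub_left, inner_smul_left, ho i j hij]
  by_contra hcon
  rw [not_le, Set.two_lt_ncard_iff (Set.toFinite _)] at hcon
  obtain ⟨i, j, k, hi, hj, hk, hij, hik, hjk⟩ := hcon
  simp only [Set.mem_setOf_eq] at hi hj hk
  have r1 := D.reflect_mem β hβ.1 (a i) (hg i).1
  have r2 := D.reflect_mem _ r1 (a j) (hg j).1
  rw [hstep _ _ _ _ hij] at r2
  have r3 := D.reflect_mem _ r2 (a k) (hg k).1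
  rw [hstep _ _ _ _ hjk, hstep _ _ _ _ hik] at r3
  have h := hlow _ r3
  have hb : f β = 1 := by rw [hf _ hβ.1, hβ.2]; simp
  simp only [map_sub, map_smul, hfa, hb, smul_eq_mul, mul_one] at h
  linarith
end

section
/- Let α_1, …, α_r be an orthogonal sequence of long roots in Φ(g/p) with r ≥ 2. Then there exists a root β ∈ Φ(g/p) with ⟨β, α_1⟩ = ⟨β, α_2⟩ = 1. -/
open scoped RealInnerProductSpace

namespace IrredRootSystem

variable {V : Type*} [NormedAddCommGroup V] [InnerProductSpace ℝ V]

lemma aux_self_pos (D : IrredRootSystem V) {β : V} (h : β ∈ D.Φ) : 0 < ⟪β, β⟫ := by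
  apply real_inner_self_pos.2
  rintro rfl
  exact D.zero_notMem h

lemma aux_inner_refl (β γ x : V) :
    ⟪β - rpair β γ • γ, x⟫ = ⟪β, x⟫ - rpair β γ * ⟪γ, x⟫ := by
  rw [inner_sub_left, real_inner_smul_left]

lemma aux_rpair_ne (D : IrredRootSystem V) {β γ : V} (h : γ ∈ D.Φ) (h' : ⟪β, γ⟫ ≠ 0) :
    rpair β γ ≠ 0 := by
  have := D.aux_self_pos h
  unfold rpair
  positivity

lemma aux_connect (D : IrredRootSystem V) {a b : V} (ha : a ∈ D.Φ) (hb : b ∈ D.Φ) :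
    ∃ δ ∈ D.Φ, ⟪δ, a⟫ ≠ 0 ∧ ⟪δ, b⟫ ≠ 0 := by
  by_contra hcon
  apply D.irreducible
  refine ⟨{γ | γ ∈ D.Φ ∧ ∃ δ ∈ D.Φ, ⟪δ, a⟫ ≠ 0 ∧ ⟪δ, γ⟫ ≠ 0},
    {γ | γ ∈ D.Φ ∧ ¬ ∃ δ ∈ D.Φ, ⟪δ, a⟫ ≠ 0 ∧ ⟪δ, γ⟫ ≠ 0},
    ⟨a, ha, a, ha, (D.aux_self_pos ha).ne', (D.aux_self_pos ha).ne'⟩, ⟨b, hb, hcon⟩, ?_, ?_, ?_⟩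
  · rw [Set.disjoint_left]
    rintro x ⟨_, h1⟩ ⟨_, h2⟩
    exact h2 h1
  · ext x
    simp only [Set.mem_union, Set.mem_ofPred_eq]
    rw [← and_or_left, and_iff_left (Classical.em _)]
  · rintro γ ⟨hγ, δ, hδ, h1, h2⟩ η ⟨hη, hn⟩
    by_contra h3
    apply hn
    by_cases h4 : ⟪δ, η⟫ = 0
    · by_cases h5 : ⟪γ, a⟫ = 0
      · refine ⟨_, D.reflect_mem δ hδ γ hγ, ?_, ?_⟩
        · rw [aux_inner_refl, h5]; simpa using h1
        · rw [aux_inner_refl, h4]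
          simpa using ⟨D.aux_rpair_ne hγ h2, h3⟩
      · exact ⟨γ, hγ, h5, h3⟩
    · exact ⟨δ, hδ, h1, h4⟩

lemma aux_pair (D : IrredRootSystem V) {γ a : V} (hγ : γ ∈ D.Φ) (ha : D.IsLong a)
    (h0 : ⟪γ, a⟫ ≠ 0) (h1 : γ ≠ a) (h2 : γ ≠ -a) : rpair γ a = 1 ∨ rpair γ a = -1 := by
  obtain ⟨z, hz⟩ := D.crystallographic γ hγ a ha.1
  have hp := D.aux_self_pos ha.1
  have hl := ha.2 γ hγ
  have e1 : 0 < ⟪γ - a, γ - a⟫ := real_inner_self_pos.2 (sub_ne_zero.2 h1)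
  have e2 : 0 < ⟪γ + a, γ + a⟫ := real_inner_self_pos.2 (fun h => h2 (eq_neg_of_add_eq_zero_left h))
  rw [real_inner_sub_sub_self] at e1
  rw [real_inner_add_add_self] at e2
  have hne := D.aux_rpair_ne ha.1 h0
  have hu : rpair γ a < 2 := by
    unfold rpair; rw [div_lt_iff₀ hp]; linarith
  have hlo : -2 < rpair γ a := by
    unfold rpair; rw [lt_div_iff₀ hp]; linarith
  rw [hz] at hne hu hlo ⊢
  norm_cast at hne hu hlo ⊢
  have : -2 < z := by exact_mod_cast hlo
  omega

lemma aux_fix (D : IrredRootSystem V) {γ a : V} (hγ : γ ∈ D.Φ) (ha : a ∈ D.Φ)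
    (h : rpair γ a = 1 ∨ rpair γ a = -1) :
    ∃ δ ∈ D.Φ, rpair δ a = 1 ∧ ∀ b, ⟪a, b⟫ = 0 → rpair δ b = rpair γ b := by
  rcases h with h | h
  · exact ⟨γ, hγ, h, fun _ _ => rfl⟩
  · refine ⟨_, D.reflect_mem γ hγ a ha, ?_, ?_⟩
    · have hp := D.aux_self_pos ha
      have h' := h
      unfold rpair at h'
      rw [div_eq_iff hp.ne'] at h'
      have e := aux_inner_refl γ a a
      rw [h] at e ⊢
      unfold rpair
      rw [e, div_eq_iff hp.ne']
      linarith
    · intro b hb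
      have := aux_inner_refl γ a b
      rw [hb] at this
      simp only [rpair] at this ⊢
      rw [this]; simp

lemma aux_coeff (D : IrredRootSystem V) {α : V} (hα : α ∈ D.Δ) {w x y z : V} (hw : w ∈ D.Φ)
    (hx : x ∈ D.Φ) (hy : y ∈ D.Φ) (hz : z ∈ D.Φ) (h : w + x = y + z) :
    D.m w α + D.m x α = D.m y α + D.m z α := by
  have hli := linearIndependent_iff'.1 D.base_indep Finset.univ
    (fun δ => ((D.m w δ + D.m x δ - D.m y δ - D.m z δ : ℤ) : ℝ)) ?_ ⟨α, hα⟩ (Finset.mem_univ _)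
  · have : D.m w α + D.m x α - D.m y α - D.m z α = 0 := by exact_mod_cast hli
    omega
  · rw [Finset.univ_eq_attach,
      Finset.sum_attach D.Δ (fun δ => ((D.m w δ + D.m x δ - D.m y δ - D.m z δ : ℤ) : ℝ) • δ)]
    push_cast
    simp only [sub_smul, add_smul, Finset.sum_sub_distrib, Finset.sum_add_distrib]
    rw [← D.base_repr w hw, ← D.base_repr x hx, ← D.base_repr y hy, ← D.base_repr z hz, h]
    abel

end IrredRootSystem

/-- For an orthogonal sequence of long roots in `Φ(g/p)` of length `r ≥ 2`,
there is a root `β ∈ Φ(g/p)` with `⟨β, α_1⟩ = ⟨β, α_2⟩ = 1`. -/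
theorem exists_common_pairing_one {V : Type*} [NormedAddCommGroup V]
    [InnerProductSpace ℝ V] (D : IrredRootSystem V)
    (α : V) (hα : α ∈ D.Δ) (hcom : D.m D.θ α = 1)
    {r : ℕ} (hr : 2 ≤ r) (a : Fin r → V) (ha : D.IsOrthLongSeq α a) :
    ∃ β ∈ D.gp α, rpair β (a ⟨0, by omega⟩) = 1 ∧ rpair β (a ⟨1, by omega⟩) = 1 := by
  obtain ⟨hL, hG, hO⟩ := ha
  have ho := hO ⟨0, by omega⟩ ⟨1, by omega⟩ (by simp)
  have hp := hL ⟨0, by omega⟩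
  have hq := hL ⟨1, by omega⟩
  have mp := (hG ⟨0, by omega⟩).2
  have mq := (hG ⟨1, by omega⟩).2
  generalize a ⟨0, by omega⟩ = p at *
  generalize a ⟨1, by omega⟩ = q at *
  have ho' : ⟪q, p⟫ = 0 := by rw [real_inner_comm]; exact ho
  obtain ⟨γ, hγ, g1, g2⟩ := D.aux_connect hp.1 hq.1
  have r1 := D.aux_pair hγ hp g1 (by rintro rfl; exact g2 ho)
    (by rintro rfl; exact g2 (by rw [inner_neg_left, ho, neg_zero]))
  have r2 := D.aux_pair hγ hq g2 (by rintro rfl; exact g1 ho')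
    (by rintro rfl; exact g1 (by rw [inner_neg_left, ho', neg_zero]))
  obtain ⟨δ, hδ, d1, d2⟩ := D.aux_fix hγ hp.1 r1
  rw [← d2 q ho] at r2
  obtain ⟨ε, hε, e1, e2⟩ := D.aux_fix hδ hq.1 r2
  have e3 : rpair ε p = 1 := by rw [e2 p ho', d1]
  refine ⟨ε, ⟨hε, ?_⟩, e3, e1⟩
  have s1 := D.reflect_mem ε hε p hp.1
  have e4 : rpair (ε - rpair ε p • p) q = 1 := by
    have := IrredRootSystem.aux_inner_refl ε p q
    unfold rpair at this e1 ⊢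
    rw [this, ho, mul_zero, sub_zero, e1]
  have s2 := D.reflect_mem _ s1 q hq.1
  rw [e4, e3, one_smul, one_smul] at s2
  have s3 := D.neg_mem _ s2
  have c := D.aux_coeff hα hε s3 hp.1 hq.1 (by abel)
  have t1 := D.theta_highest _ hε α hα
  have t2 := D.theta_highest _ s3 α hα
  omega
end

section
/- Let α_1, …, α_r be an orthogonal sequence of long roots in Φ(g/p). Suppose γ_1, γ_2 ∈ Φ satisfy, for k = 1, 2: m_α(γ_k) = 0, ⟨γ_k, α_i⟩ ≤ 0 for all i ∈ {1, …, r}, and ⟨γ_k, α_i⟩ = −1 for exactly one index i. Then γ_1 + γ_2 ≠ 0 and γ_1 + γ_2 ∉ Φ. (This is the root-theoretic content of the assertion that the flag variety L/Q is cominuscule.) -/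
open scoped RealInnerProductSpace

theorem aux_functional {V : Type*} [NormedAddCommGroup V]
    [InnerProductSpace ℝ V] (D : IrredRootSystem V) (α : V) (hα : α ∈ D.Δ) :
    ∃ f : V →ₗ[ℝ] ℝ, ∀ β ∈ D.Φ, f β = D.m β α := by
  classical
  obtain ⟨f, hf⟩ := LinearMap.exists_extend
    ((Finsupp.lapply (⟨α, hα⟩ : D.Δ) : (D.Δ →₀ ℝ) →ₗ[ℝ] ℝ) ∘ₗ D.base_indep.repr)
  have key : ∀ δ : D.Δ, f (δ : V) = if (δ : V) = α then 1 else 0 := by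
    intro δ
    have hs : (δ : V) ∈ Submodule.span ℝ (Set.range (fun δ : D.Δ => (δ : V))) :=
      Submodule.subset_span ⟨δ, rfl⟩
    have h := LinearMap.congr_fun hf ⟨(δ : V), hs⟩
    have h2 := D.base_indep.repr_eq_single δ ⟨(δ : V), hs⟩ rfl
    simp only [LinearMap.comp_apply, Submodule.subtype_apply, h2,
      Finsupp.lapply_apply, Finsupp.single_apply] at h
    simpa [Subtype.ext_iff] using h
  refine ⟨f, fun β hβ => ?_⟩
  conv_lhs => rw [D.base_repr β hβ]
  rw [map_sum]
  have : ∀ δ ∈ D.Δ, f ((D.m β δ : ℝ) • δ) = if δ = α then (D.m β δ : ℝ) else 0 := by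
    intro δ hδ
    rw [map_smul, key ⟨δ, hδ⟩]
    simp
  rw [Finset.sum_congr rfl this]
  simp [hα]

/-- (Root-theoretic content of "`L/Q` is cominuscule".) If `γ₁, γ₂` are
roots of `l/q` (each has `m_α = 0`, pairs nonpositively with all `α_i`, and pairs to `-1`
with exactly one `α_i`), then `γ₁ + γ₂` is neither zero nor a root. -/
theorem levi_quotient_cominuscule {V : Type*} [NormedAddCommGroup V]
    [InnerProductSpace ℝ V] (D : IrredRootSystem V)
    (α : V) (hα : α ∈ D.Δ) (hcom : D.m D.θ α = 1)
    {r : ℕ} (a : Fin r → V) (ha : D.IsOrthLongSeq α a)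
    (γ₁ γ₂ : V) (h₁ : γ₁ ∈ D.Φ) (h₂ : γ₂ ∈ D.Φ)
    (hm₁ : D.m γ₁ α = 0) (hm₂ : D.m γ₂ α = 0)
    (hle₁ : ∀ i, rpair γ₁ (a i) ≤ 0) (hle₂ : ∀ i, rpair γ₂ (a i) ≤ 0)
    (hone₁ : ∃! i, rpair γ₁ (a i) = -1) (hone₂ : ∃! i, rpair γ₂ (a i) = -1) :
    γ₁ + γ₂ ≠ 0 ∧ γ₁ + γ₂ ∉ D.Φ := by
  obtain ⟨hlong, hgp, horth⟩ := ha
  obtain ⟨i, hi, -⟩ := hone₁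
  obtain ⟨j, hj, -⟩ := hone₂
  have hadd : ∀ c : V, rpair (γ₁ + γ₂) c = rpair γ₁ c + rpair γ₂ c := by
    intro c
    simp only [rpair, inner_add_left]
    ring
  have hi' : rpair (γ₁ + γ₂) (a i) ≤ -1 := by
    have := hle₂ i
    rw [hadd]; linarith
  have hj' : rpair (γ₁ + γ₂) (a j) ≤ -1 := by
    have := hle₁ j
    rw [hadd]; linarith
  obtain ⟨f, hf⟩ := aux_functional D α hα
  have hfa : ∀ k, f (a k) = 1 := fun k => by rw [hf _ (hgp k).1, (hgp k).2]; simp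
  have hfle : ∀ β ∈ D.Φ, f β ≤ 1 := by
    intro β hβ
    rw [hf β hβ]
    have := D.theta_highest β hβ α hα
    rw [hcom] at this
    exact_mod_cast this
  have hfγ : f (γ₁ + γ₂) = 0 := by
    rw [map_add, hf _ h₁, hf _ h₂, hm₁, hm₂]; simp
  constructor
  · intro h0
    rw [h0] at hi'
    simp [rpair] at hi'
    linarith
  · intro hΦ
    have hr := D.reflect_mem _ hΦ _ (hgp i).1
    by_cases hij : i = j
    · subst hij
      have h2 : rpair (γ₁ + γ₂) (a i) = -2 := by rw [hadd, hi, hj]; norm_num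
      have := hfle _ hr
      rw [map_sub, map_smul, hfγ, hfa, h2] at this
      norm_num at this
    · have hr2 := D.reflect_mem _ hr _ (hgp j).1
      have he : rpair (γ₁ + γ₂ - rpair (γ₁ + γ₂) (a i) • a i) (a j)
          = rpair (γ₁ + γ₂) (a j) := by
        unfold rpair
        rw [inner_sub_left, real_inner_smul_left, horth i j hij, mul_zero, sub_zero]
      have := hfle _ hr2
      rw [he, map_sub, map_sub, map_smul, map_smul, hfγ, hfa, hfa] at this
      simp only [smul_eq_mul, mul_one] at this
      linarith
end

section
/- Let α_1, …, α_r (r ≥ 1) be an orthogonal sequence of long roots in Φ(g/p) that is not maximal, i.e., there exists a long root in Φ(g/p) orthogonal to every α_i. Set Φ(z) := {β ∈ Φ(g/p) : ⟨β, α_i⟩ = 0 for all i} and let Φ' := Φ ∩ span_ℚ(Φ(z)) be the set of roots lying in the rational span of Φ(z). Then Φ' cannot be partitioned into two nonempty subsets that are mutually orthogonal with respect to (·,·); equivalently, the graph with vertex set Φ' in which two roots are joined by an edge when they are non-orthogonal is connected. (This is the root-theoretic content of the assertion that the semisimple part of G' is simple.) -/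
open scoped RealInnerProductSpace

namespace IrredRootSystem

variable {V : Type*} [NormedAddCommGroup V] [InnerProductSpace ℝ V]

theorem aux_ip_pos (D : IrredRootSystem V) {β : V} (hβ : β ∈ D.Φ) : 0 < ⟪β, β⟫ := by
  have : β ≠ 0 := fun h => D.zero_notMem (h ▸ hβ)
  exact real_inner_self_pos.mpr this

theorem aux_rpair_eq_zero (D : IrredRootSystem V) {β γ : V} (hγ : γ ∈ D.Φ) :
    rpair β γ = 0 ↔ ⟪β, γ⟫ = 0 := by
  have := (D.aux_ip_pos hγ).ne'
  unfold rpair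
  rw [div_eq_zero_iff]
  constructor
  · rintro (h | h)
    · linarith
    · exact absurd h this
  · intro h
    left
    rw [h, mul_zero]

theorem aux_m_lin (D : IrredRootSystem V) {α β γ ε : V} (hα : α ∈ D.Δ) (hβ : β ∈ D.Φ)
    (hγ : γ ∈ D.Φ) (hε : ε ∈ D.Φ) (c : ℤ) (h : ε = β - (c : ℝ) • γ) :
    D.m ε α = D.m β α - c * D.m γ α := by
  have hli := D.base_indep
  rw [linearIndependent_iff'] at hli
  have key : ∑ δ : D.Δ, ((D.m ε δ : ℝ) - D.m β δ + c * D.m γ δ) • (δ : V) = 0 := by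
    rw [Finset.sum_coe_sort D.Δ (fun δ => ((D.m ε δ : ℝ) - D.m β δ + c * D.m γ δ) • δ)]
    simp only [add_smul, sub_smul, Finset.sum_add_distrib, Finset.sum_sub_distrib, mul_smul,
      ← Finset.smul_sum]
    rw [← D.base_repr β hβ, ← D.base_repr γ hγ, ← D.base_repr ε hε, h]
    abel
  have := hli Finset.univ _ key ⟨α, hα⟩ (Finset.mem_univ _)
  have h2 : (D.m ε α : ℝ) = D.m β α - c * D.m γ α := by
    simp only at this
    linarith
  exact_mod_cast h2

theorem aux_m_neg (D : IrredRootSystem V) {α β : V} (hα : α ∈ D.Δ) (hβ : β ∈ D.Φ) :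
    D.m (-β) α = - D.m β α := by
  have := D.aux_m_lin hα hβ hβ (D.neg_mem β hβ) 2 (by push_cast; rw [two_smul]; abel)
  linarith

/-- Reflection together with its integer coefficient. -/
theorem aux_refl (D : IrredRootSystem V) {α β γ : V} (hα : α ∈ D.Δ) (hβ : β ∈ D.Φ)
    (hγ : γ ∈ D.Φ) : ∃ k : ℤ, rpair β γ = k ∧ β - (k : ℝ) • γ ∈ D.Φ ∧
      D.m (β - (k : ℝ) • γ) α = D.m β α - k * D.m γ α ∧ 2 * ⟪β, γ⟫ = k * ⟪γ, γ⟫ := by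
  obtain ⟨k, hk⟩ := D.crystallographic β hβ γ hγ
  have h1 := D.reflect_mem β hβ γ hγ
  rw [hk] at h1
  refine ⟨k, hk, h1, D.aux_m_lin hα hβ hγ h1 k rfl, ?_⟩
  have := (D.aux_ip_pos hγ).ne'
  rw [← hk, rpair, div_mul_cancel₀ _ this]

theorem aux_m_le (D : IrredRootSystem V) {α β : V} (hα : α ∈ D.Δ) (hcom : D.m D.θ α = 1)
    (hβ : β ∈ D.Φ) : D.m β α ≤ 1 := hcom ▸ D.theta_highest β hβ α hα

theorem aux_nonneg (D : IrredRootSystem V) {α β γ : V} (hα : α ∈ D.Δ) (hcom : D.m D.θ α = 1)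
    (hβ : β ∈ D.gp α) (hγ : γ ∈ D.gp α) : 0 ≤ ⟪β, γ⟫ := by
  obtain ⟨k, -, h1, h2, h3⟩ := D.aux_refl hα hβ.1 hγ.1
  have h4 := D.aux_m_le hα hcom h1
  rw [h2, hβ.2, hγ.2] at h4
  have hk : (0 : ℝ) ≤ k := by exact_mod_cast (by linarith : 0 ≤ k)
  have := mul_nonneg hk (D.aux_ip_pos hγ.1).le
  linarith

theorem aux_common (D : IrredRootSystem V) {β γ : V} (hβ : β ∈ D.Φ) (hγ : γ ∈ D.Φ) :
    ∃ ε ∈ D.Φ, ⟪ε, β⟫ ≠ 0 ∧ ⟪ε, γ⟫ ≠ 0 := by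
  by_contra hno
  apply D.irreducible
  refine ⟨{x | x ∈ D.Φ ∧ ∃ ε ∈ D.Φ, ⟪ε, β⟫ ≠ 0 ∧ ⟪ε, x⟫ ≠ 0},
    {x | x ∈ D.Φ ∧ ¬ ∃ ε ∈ D.Φ, ⟪ε, β⟫ ≠ 0 ∧ ⟪ε, x⟫ ≠ 0},
    ⟨β, hβ, β, hβ, (D.aux_ip_pos hβ).ne', (D.aux_ip_pos hβ).ne'⟩, ⟨γ, hγ, hno⟩, ?_, ?_, ?_⟩
  · rw [Set.disjoint_left]
    rintro x ⟨_, h⟩ ⟨_, h'⟩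
    exact h' h
  · ext x
    constructor
    · rintro (h | h)
      · exact h.1
      · exact h.1
    · intro h
      by_cases h' : ∃ ε ∈ D.Φ, ⟪ε, β⟫ ≠ 0 ∧ ⟪ε, x⟫ ≠ 0
      · exact Or.inl ⟨h, h'⟩
      · exact Or.inr ⟨h, h'⟩
  · rintro x ⟨hx, ε, hε, h1, h2⟩ y ⟨hy, hny⟩
    by_contra hxy
    apply hny
    by_cases h3 : ⟪ε, y⟫ = 0
    · by_cases h4 : ⟪x, β⟫ = 0
      · refine ⟨_, D.reflect_mem x hx ε hε, ?_, ?_⟩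
        · rw [inner_sub_left, inner_smul_left, h4, zero_sub, neg_ne_zero]
          refine mul_ne_zero ?_ h1
          simp only [conj_trivial]
          rw [Ne, D.aux_rpair_eq_zero hε, real_inner_comm]
          exact h2
        · rw [inner_sub_left, inner_smul_left, h3, mul_zero, sub_zero]
          exact hxy
      · exact ⟨x, hx, h4, hxy⟩
    · exact ⟨ε, hε, h1, h3⟩

theorem aux_common_gp (D : IrredRootSystem V) {α β γ : V} (hα : α ∈ D.Δ)
    (hcom : D.m D.θ α = 1) (hβ : β ∈ D.gp α) (hγ : γ ∈ D.gp α) (hbg : ⟪β, γ⟫ = 0) :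
    ∃ δ ∈ D.gp α, ⟪δ, β⟫ ≠ 0 ∧ ⟪δ, γ⟫ ≠ 0 := by
  suffices h : ∃ δ ∈ D.Φ, D.m δ α ≠ 0 ∧ ⟪δ, β⟫ ≠ 0 ∧ ⟪δ, γ⟫ ≠ 0 by
    obtain ⟨δ, hδ, h0, h1, h2⟩ := h
    have hle := D.aux_m_le hα hcom hδ
    have hle' := D.aux_m_le hα hcom (D.neg_mem δ hδ)
    have hneg := D.aux_m_neg hα hδ
    by_cases h : D.m δ α = 1
    · exact ⟨δ, ⟨hδ, h⟩, h1, h2⟩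
    · refine ⟨-δ, ⟨D.neg_mem δ hδ, by omega⟩, ?_, ?_⟩ <;> rw [inner_neg_left, neg_ne_zero] <;>
        assumption
  obtain ⟨ε, hε, h1, h2⟩ := D.aux_common hβ.1 hγ.1
  by_cases h0 : D.m ε α = 0
  · obtain ⟨k, hk, hm, hmα, hk2⟩ := D.aux_refl hα hε hβ.1
    refine ⟨_, hm, ?_, ?_, ?_⟩
    · rw [hmα, h0, hβ.2]
      intro h
      have : k = 0 := by linarith
      rw [this] at hk
      exact h1 ((D.aux_rpair_eq_zero hβ.1).1 (by simpa using hk))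
    · rw [inner_sub_left, real_inner_smul_left, ← hk2]
      intro h
      apply h1
      linarith
    · rw [inner_sub_left, real_inner_smul_left, hbg, mul_zero, sub_zero]
      exact h2
  · exact ⟨ε, hε, h0, h1, h2⟩

theorem aux_orth (D : IrredRootSystem V) {α β γ δ x : V} (hα : α ∈ D.Δ)
    (hcom : D.m D.θ α = 1) (hβ : β ∈ D.gp α) (hγ : γ ∈ D.gp α) (hbg : ⟪β, γ⟫ = 0)
    (hδ : δ ∈ D.gp α) (h1 : ⟪δ, β⟫ ≠ 0) (h2 : ⟪δ, γ⟫ ≠ 0) (hx : x ∈ D.gp α)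
    (hxb : ⟪β, x⟫ = 0) (hxg : ⟪γ, x⟫ = 0) : ⟪δ, x⟫ = 0 := by
  obtain ⟨p, -, hp1, hp2, hp3⟩ := D.aux_refl hα hδ.1 hβ.1
  obtain ⟨q, -, hq1, hq2, hq3⟩ := D.aux_refl hα hp1 hγ.1
  have e : ⟪δ - (p : ℝ) • β, γ⟫ = ⟪δ, γ⟫ := by
    rw [inner_sub_left, real_inner_smul_left, hbg, mul_zero, sub_zero]
  rw [e] at hq3
  have hb := D.aux_nonneg hα hcom hδ hβ
  have hg := D.aux_nonneg hα hcom hδ hγ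
  have hp : 0 < p := by
    have : (0 : ℝ) < p := by
      refine pos_of_mul_pos_left (b := ⟪β, β⟫) ?_ (D.aux_ip_pos hβ.1).le
      rw [← hp3]
      have := lt_of_le_of_ne hb (Ne.symm h1)
      linarith
    exact_mod_cast this
  have hq : 0 < q := by
    have : (0 : ℝ) < q := by
      refine pos_of_mul_pos_left (b := ⟪γ, γ⟫) ?_ (D.aux_ip_pos hγ.1).le
      rw [← hq3]
      have := lt_of_le_of_ne hg (Ne.symm h2)
      linarith
    exact_mod_cast this
  rw [hp2, hδ.2, hβ.2, hγ.2] at hq2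
  have hn := D.aux_m_neg hα hq1
  have hnm := D.neg_mem _ hq1
  have hle := D.aux_m_le hα hcom hnm
  have hmem : -(δ - (p : ℝ) • β - (q : ℝ) • γ) ∈ D.gp α := ⟨hnm, by omega⟩
  have h3 := D.aux_nonneg hα hcom hmem hx
  have h4 := D.aux_nonneg hα hcom hδ hx
  rw [inner_neg_left, inner_sub_left, inner_sub_left, real_inner_smul_left, real_inner_smul_left,
    hxb, hxg] at h3
  linarith

end IrredRootSystem

/-- (Root-theoretic content of "the semisimple part of `G'` is simple".)
For a non-maximal orthogonal sequence of long roots in `Φ(g/p)`, the set `Φ'` of roots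
lying in the rational span of `Φ(z) = {β ∈ Φ(g/p) : ⟨β, α_i⟩ = 0 for all i}` cannot be
partitioned into two nonempty mutually orthogonal subsets. -/
theorem gprime_root_system_connected {V : Type*} [NormedAddCommGroup V]
    [InnerProductSpace ℝ V] (D : IrredRootSystem V)
    (α : V) (hα : α ∈ D.Δ) (hcom : D.m D.θ α = 1)
    {r : ℕ} (hr : 1 ≤ r) (a : Fin r → V) (ha : D.IsOrthLongSeq α a)
    (hnotmax : ∃ β, D.IsLong β ∧ β ∈ D.gp α ∧ ∀ i, ⟪β, a i⟫ = 0) :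
    ¬ ∃ A B : Set V, A.Nonempty ∧ B.Nonempty ∧ Disjoint A B ∧
      A ∪ B = {β | β ∈ D.Φ ∧ ∃ (T : Finset V) (c : V → ℚ),
        (↑T : Set V) ⊆ {z | z ∈ D.gp α ∧ ∀ i, rpair z (a i) = 0} ∧
        β = ∑ γ ∈ T, (c γ : ℝ) • γ} ∧
      ∀ β ∈ A, ∀ γ ∈ B, ⟪β, γ⟫ = 0 := by
  rintro ⟨A, B, hA, hB, -, hAB, horth⟩
  set Z : Set V := {z | z ∈ D.gp α ∧ ∀ i, rpair z (a i) = 0} with hZ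
  have haΦ : ∀ i, a i ∈ D.Φ := fun i => (ha.2.1 i).1
  have hZsub : Z ⊆ A ∪ B := by
    intro z hz
    rw [hAB]
    refine ⟨hz.1.1, {z}, fun _ => 1, ?_, ?_⟩
    · simpa using hz
    · simp
  have hmeet : ∀ C E : Set V, C.Nonempty → C ∪ E = A ∪ B → (∀ β ∈ C, ∀ γ ∈ E, ⟪β, γ⟫ = 0) →
      ∃ z ∈ Z, z ∈ C := by
    intro C E ⟨x, hx⟩ hCE ho
    by_contra hno
    have hxm : x ∈ A ∪ B := hCE ▸ Or.inl hx
    rw [hAB] at hxm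
    obtain ⟨hxΦ, T, c, hT, hsum⟩ := hxm
    have : ⟪x, x⟫ = 0 := by
      have hs : ⟪x, x⟫ = ⟪∑ γ ∈ T, (c γ : ℝ) • γ, x⟫ := congrArg (fun v => ⟪v, x⟫) hsum
      rw [hs, sum_inner]
      refine Finset.sum_eq_zero fun g hg => ?_
      have hgZ : g ∈ Z := hT hg
      have : g ∈ C ∪ E := hCE ▸ hZsub hgZ
      rcases this with h | h
      · exact absurd ⟨g, hgZ, h⟩ hno
      · rw [real_inner_smul_left, real_inner_comm, ho x hx g h, mul_zero]
    exact (D.aux_ip_pos hxΦ).ne' this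
  obtain ⟨β, hβZ, hβA⟩ := hmeet A B hA rfl horth
  obtain ⟨γ, hγZ, hγB⟩ := hmeet B A hB (Set.union_comm _ _)
    (fun x hx y hy => by rw [real_inner_comm]; exact horth y hy x hx)
  have hbg := horth β hβA γ hγB
  obtain ⟨δ, hδ, h1, h2⟩ := D.aux_common_gp hα hcom hβZ.1 hγZ.1 hbg
  have hδZ : δ ∈ Z := by
    refine ⟨hδ, fun i => ?_⟩
    rw [D.aux_rpair_eq_zero (haΦ i)]
    exact D.aux_orth hα hcom hβZ.1 hγZ.1 hbg hδ h1 h2 (ha.2.1 i)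
      ((D.aux_rpair_eq_zero (haΦ i)).1 (hβZ.2 i)) ((D.aux_rpair_eq_zero (haΦ i)).1 (hγZ.2 i))
  rcases hZsub hδZ with h | h
  · exact h2 (horth δ h γ hγB)
  · exact h1 (by rw [real_inner_comm]; exact horth β hβA δ h)
end

section
/- Let W be the Weyl group of Φ and suppose π', π ∈ W satisfy π' ≤ π in the Bruhat order. Then there exists an injection ι : Inv(π') → Inv(π) such that for every β ∈ Inv(π'), the difference ι(β) − β is a nonnegative integer combination of the simple roots (i.e., ι(β) is greater than or equal to β in the root order). -/
open scoped RealInnerProductSpace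

section Weyl

variable {V : Type*} [NormedAddCommGroup V] [InnerProductSpace ℝ V]

/-- `w` is the reflection in some root of `Φ`. -/
def IsRootReflection (Φ : Set V) (w : V ≃ₗ[ℝ] V) : Prop :=
  ∃ β ∈ Φ, ∀ x, w x = x - rpair x β • β

/-- The Weyl group of `Φ`: the subgroup of linear automorphisms generated by the
reflections in the roots. -/
def weylGroup (Φ : Set V) : Subgroup (V ≃ₗ[ℝ] V) :=
  Subgroup.closure {w | IsRootReflection Φ w}

/-- The standard parabolic subgroup of the Weyl group generated by the simple reflections
`s_δ` for `δ` in a set `J` of simple roots. -/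
def simpleParabolic (D : IrredRootSystem V) (J : Set V) : Subgroup (V ≃ₗ[ℝ] V) :=
  Subgroup.closure {u | ∃ δ ∈ J ∩ (↑D.Δ : Set V), ∀ x, u x = x - rpair x δ • δ}

/-- The inversion set `Inv(w) = {β ∈ Φ⁺ : w(β) ∈ Φ⁻}`. -/
def invSet (D : IrredRootSystem V) (w : V ≃ₗ[ℝ] V) : Set V :=
  {β | β ∈ D.Pos ∧ w β ∈ D.Neg}

/-- The length `ℓ(w) = |Inv(w)|`. -/
noncomputable def len (D : IrredRootSystem V) (w : V ≃ₗ[ℝ] V) : ℕ := (invSet D w).ncard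

end Weyl

/-- The Bruhat order on the Weyl group: the partial order generated by the relations
`w < t * w` whenever `t` is a reflection in a root and `ℓ(w) < ℓ(t * w)`. -/
def bruhatLe {V : Type*} [NormedAddCommGroup V] [InnerProductSpace ℝ V]
    (D : IrredRootSystem V) : (V ≃ₗ[ℝ] V) → (V ≃ₗ[ℝ] V) → Prop :=
  Relation.ReflTransGen
    (fun u v => (∃ t : V ≃ₗ[ℝ] V, IsRootReflection D.Φ t ∧ v = t * u) ∧ len D u < len D v)

section Helpers

variable {V : Type*} [NormedAddCommGroup V] [InnerProductSpace ℝ V]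

/-- Domination of inversion sets. -/
def InvDom (D : IrredRootSystem V) (u v : V ≃ₗ[ℝ] V) : Prop :=
  ∃ ι : V → V, Set.MapsTo ι (invSet D u) (invSet D v) ∧ Set.InjOn ι (invSet D u) ∧
      ∀ β ∈ invSet D u, ∃ c : V → ℕ, ι β - β = ∑ δ ∈ D.Δ, (c δ : ℝ) • δ

theorem InvDom.trans' {D : IrredRootSystem V} {u v w : V ≃ₗ[ℝ] V}
    (h1 : InvDom D u v) (h2 : InvDom D v w) : InvDom D u w := by
  obtain ⟨f, hf, fi, hfc⟩ := h1
  obtain ⟨g, hg, gi, hgc⟩ := h2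
  refine ⟨g ∘ f, hg.comp hf, gi.comp fi hf, fun β hβ => ?_⟩
  obtain ⟨c, hc⟩ := hfc β hβ
  obtain ⟨d, hd⟩ := hgc _ (hf hβ)
  refine ⟨fun δ => d δ + c δ, ?_⟩
  have : g (f β) - β = (g (f β) - f β) + (f β - β) := by abel
  simp only [Function.comp, this, hc, hd, Nat.cast_add, add_smul, Finset.sum_add_distrib]

theorem m_lin (D : IrredRootSystem V) {a b c : V} (ha : a ∈ D.Φ) (hb : b ∈ D.Φ) (hc : c ∈ D.Φ)
    (z : ℤ) (h : a = b - (z : ℝ) • c) : ∀ δ ∈ D.Δ, D.m a δ = D.m b δ - z * D.m c δ := by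
  have li := linearIndependent_iff'.1 D.base_indep Finset.univ
    (fun δ => ((D.m a δ - (D.m b δ - z * D.m c δ) : ℤ) : ℝ)) ?_
  · intro δ hδ
    have := li ⟨δ, hδ⟩ (Finset.mem_univ _)
    have h2 : D.m a δ - (D.m b δ - z * D.m c δ) = 0 := by exact_mod_cast this
    omega
  · have e := Finset.sum_coe_sort D.Δ (fun δ : V => ((D.m a δ - (D.m b δ - z * D.m c δ) : ℤ) : ℝ) • δ)
    refine e.trans ?_
    have h1 : ∑ δ ∈ D.Δ, ((D.m a δ - (D.m b δ - z * D.m c δ) : ℤ) : ℝ) • δ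
      = ∑ δ ∈ D.Δ, (D.m a δ : ℝ) • δ - (∑ δ ∈ D.Δ, (D.m b δ : ℝ) • δ
        - (z : ℝ) • ∑ δ ∈ D.Δ, (D.m c δ : ℝ) • δ) := by
      rw [Finset.smul_sum, ← Finset.sum_sub_distrib, ← Finset.sum_sub_distrib]
      refine Finset.sum_congr rfl fun δ _ => ?_
      push_cast
      module
    rw [h1, ← D.base_repr a ha, ← D.base_repr b hb, ← D.base_repr c hc, ← h, sub_self]

theorem m_neg (D : IrredRootSystem V) {a : V} (ha : a ∈ D.Φ) :
    ∀ δ ∈ D.Δ, D.m (-a) δ = - D.m a δ := by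
  intro δ hδ
  have := m_lin D (D.neg_mem a ha) ha ha 2 (by push_cast; module) δ hδ
  omega

theorem rpair_neg' (x γ : V) : rpair x (-γ) = - rpair x γ := by
  simp [rpair, neg_div]

theorem refl_refl (x γ : V) (hγ : γ ≠ 0) :
    (x - rpair x γ • γ) - rpair (x - rpair x γ • γ) γ • γ = x := by
  have h : ⟪γ, γ⟫ ≠ 0 := by simpa using hγ
  have : rpair (x - rpair x γ • γ) γ = - rpair x γ := by
    simp only [rpair, inner_sub_left, real_inner_smul_left]
    field_simp
    ring
  rw [this]; module

theorem core (D : IrredRootSystem V) (w v : V ≃ₗ[ℝ] V) (hw : ∀ β ∈ D.Φ, w β ∈ D.Φ) (γ : V)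
    (hγ : γ ∈ D.Pos) (hwγ : w γ ∈ D.Pos) (hv : ∀ x, v x = w (x - rpair x γ • γ)) :
    InvDom D w v := by
  classical
  have hγ0 : γ ≠ 0 := fun h => D.zero_notMem (h ▸ hγ.1)
  have hvs : ∀ x, v (x - rpair x γ • γ) = w x := fun x => by rw [hv, refl_refl x γ hγ0]
  -- the case analysis
  have key : ∀ β ∈ invSet D w, β ∉ invSet D v → β - rpair β γ • γ ∈ invSet D v ∧
      ∃ c : V → ℕ, (β - rpair β γ • γ) - β = ∑ δ ∈ D.Δ, (c δ : ℝ) • δ := by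
    intro β hβ hβv
    obtain ⟨z, hz⟩ := D.crystallographic β hβ.1.1 γ hγ.1
    have hs := D.reflect_mem β hβ.1.1 γ hγ.1
    have hz0 : z ≤ 0 := by
      by_contra hcon
      push Not at hcon
      apply hβv
      refine ⟨hβ.1, ?_⟩
      rw [hv]
      refine ⟨hw _ hs, fun δ hδ => ?_⟩
      rw [m_lin D (hw _ hs) (hw _ hβ.1.1) hwγ.1 z (by rw [hz]; simp) δ hδ]
      have h1 := hβ.2.2 δ hδ
      have h2 := hwγ.2 δ hδ
      nlinarith
    have hm := m_lin D hs hβ.1.1 hγ.1 z (by rw [hz])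
    refine ⟨⟨⟨hs, fun δ hδ => ?_⟩, by rw [hvs]; exact hβ.2⟩, fun δ => (-z * D.m γ δ).toNat, ?_⟩
    · rw [hm δ hδ]
      have h1 := hβ.1.2 δ hδ
      have h2 := hγ.2 δ hδ
      nlinarith
    · have e : ∑ δ ∈ D.Δ, (((-z * D.m γ δ).toNat : ℕ) : ℝ) • δ
          = ∑ δ ∈ D.Δ, (-(z : ℝ)) • ((D.m γ δ : ℝ) • δ) := by
        refine Finset.sum_congr rfl fun δ hδ => ?_
        have h2 := hγ.2 δ hδ
        have h3 : (((-z * D.m γ δ).toNat : ℕ) : ℤ) = -z * D.m γ δ :=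
          Int.toNat_of_nonneg (by nlinarith)
        have h4 : (((-z * D.m γ δ).toNat : ℕ) : ℝ) = -z * D.m γ δ := by exact_mod_cast h3
        rw [h4, mul_smul]
      rw [e, ← Finset.smul_sum, ← D.base_repr γ hγ.1, hz]
      module
  have cross : ∀ a ∈ invSet D w, ∀ b ∈ invSet D w, a ∉ invSet D v →
      a - rpair a γ • γ = b → False := by
    intro a ha b hb hav hab
    apply hav
    refine ⟨ha.1, ?_⟩
    rw [hv, hab]; exact hb.2
  refine ⟨fun β => if β ∈ invSet D v then β else β - rpair β γ • γ, ?_, ?_, ?_⟩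
  · intro β hβ
    by_cases h : β ∈ invSet D v
    · simpa [h] using h
    · simpa [h] using (key β hβ h).1
  · intro a ha b hb hab
    by_cases h : a ∈ invSet D v <;> by_cases h' : b ∈ invSet D v <;>
      simp only [h, h', if_true, if_false] at hab
    · exact hab
    · exact (cross b hb a ha h' hab.symm).elim
    · exact (cross a ha b hb h hab).elim
    · rw [← refl_refl a γ hγ0, hab, refl_refl b γ hγ0]
  · intro β hβ
    by_cases h : β ∈ invSet D v
    · exact ⟨fun _ => 0, by simp [h]⟩
    · simpa [h] using (key β hβ h).2

theorem weyl_pres (D : IrredRootSystem V) (u : V ≃ₗ[ℝ] V) (hu : u ∈ weylGroup D.Φ) :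
    (∀ x, x ∈ D.Φ ↔ u x ∈ D.Φ) ∧ ∀ x y, ⟪u x, u y⟫ = ⟪x, y⟫ := by
  induction hu using Subgroup.closure_induction with
  | mem t ht =>
    obtain ⟨β, hβ, h⟩ := ht
    have hβ0 : β ≠ 0 := fun h => D.zero_notMem (h ▸ hβ)
    refine ⟨fun x => ⟨fun hx => h x ▸ D.reflect_mem x hx β hβ, fun hx => ?_⟩, fun x y => ?_⟩
    · have := D.reflect_mem _ hx β hβ
      rwa [h, refl_refl x β hβ0] at this
    · have hn : ⟪β, β⟫ ≠ 0 := by simpa using hβ0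
      rw [h, h]
      simp only [rpair, inner_sub_left, inner_sub_right, real_inner_smul_left,
        real_inner_smul_right, real_inner_comm β]
      field_simp
      ring
  | one => simp
  | mul a b _ _ ha hb =>
    exact ⟨fun x => (hb.1 x).trans (ha.1 _), fun x y => (ha.2 _ _).trans (hb.2 x y)⟩
  | inv a _ ha =>
    have e : ∀ x, a (a⁻¹ x) = x := fun x => a.apply_symm_apply x
    refine ⟨fun x => ?_, fun x y => ?_⟩
    · rw [ha.1 (a⁻¹ x), e]
    · rw [← ha.2, e, e]

theorem invSet_finite (D : IrredRootSystem V) (u : V ≃ₗ[ℝ] V) : (invSet D u).Finite :=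
  D.finite.subset fun _ h => h.1.1

theorem step (D : IrredRootSystem V) (u t : V ≃ₗ[ℝ] V) (hu : u ∈ weylGroup D.Φ)
    (ht : IsRootReflection D.Φ t) (hl : len D u < len D (t * u)) : InvDom D u (t * u) := by
  have htu : t * u ∈ weylGroup D.Φ := mul_mem (Subgroup.subset_closure ht) hu
  obtain ⟨hΦ, hin⟩ := weyl_pres D u hu
  obtain ⟨hΦ', -⟩ := weyl_pres D _ htu
  obtain ⟨β, hβ, h⟩ := ht
  -- choose the positive root
  obtain ⟨γ, hγ, hγβ⟩ : ∃ γ ∈ D.Pos, ∀ x, t x = x - rpair x (u γ) • u γ := by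
    have e : u (u.symm β) = β := u.apply_symm_apply β
    have hm : u.symm β ∈ D.Φ := by rw [hΦ, e]; exact hβ
    rcases D.base_sign _ hm with hp | hn
    · exact ⟨_, ⟨hm, hp⟩, fun x => by rw [e, h]⟩
    · refine ⟨-u.symm β, ⟨D.neg_mem _ hm, fun δ hδ => ?_⟩, fun x => ?_⟩
      · rw [m_neg D hm δ hδ]; have := hn δ hδ; omega
      · rw [map_neg, e, rpair_neg', h]; simp
  have hγ0 : γ ≠ 0 := fun h => D.zero_notMem (h ▸ hγ.1)
  have hv : ∀ x, (t * u) x = u (x - rpair x γ • γ) := by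
    intro x
    change t (u x) = _
    rw [hγβ, map_sub, map_smul]
    simp only [rpair, hin]
  have huγ := (hΦ γ).1 hγ.1
  rcases D.base_sign _ huγ with hp | hn
  · exact core D u _ (fun x => (hΦ x).1) γ hγ ⟨huγ, hp⟩ hv
  · exfalso
    have hg : (t * u) γ = - u γ := by
      have hn : ⟪γ, γ⟫ ≠ 0 := by simpa using hγ0
      have : rpair γ γ = 2 := by simp only [rpair]; field_simp
      rw [hv, this, map_sub, map_smul]; module
    obtain ⟨f, hf, fi, -⟩ := core D (t * u) u (fun x => (hΦ' x).1) γ hγ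
      (by
        rw [hg]
        refine ⟨D.neg_mem _ huγ, fun δ hδ => ?_⟩
        rw [m_neg D huγ δ hδ]; have := hn δ hδ; omega)
      (fun x => by rw [hv, refl_refl x γ hγ0])
    have := Set.ncard_le_ncard_of_injOn f hf fi (invSet_finite D u)
    unfold len at hl
    omega

end Helpers

/-- If `π' ≤ π` in the Bruhat order, then there is an injection
`ι : Inv(π') → Inv(π)` such that `ι(β) - β` is a nonnegative integer combination of the
simple roots for each `β ∈ Inv(π')`. -/
theorem bruhat_inversion_injection {V : Type*} [NormedAddCommGroup V]
    [InnerProductSpace ℝ V] (D : IrredRootSystem V)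
    (π' π : V ≃ₗ[ℝ] V) (hπ' : π' ∈ weylGroup D.Φ) (hπ : π ∈ weylGroup D.Φ)
    (hle : bruhatLe D π' π) :
    ∃ ι : V → V, Set.MapsTo ι (invSet D π') (invSet D π) ∧ Set.InjOn ι (invSet D π') ∧
      ∀ β ∈ invSet D π', ∃ c : V → ℕ, ι β - β = ∑ δ ∈ D.Δ, (c δ : ℝ) • δ := by
  have : π ∈ weylGroup D.Φ ∧ InvDom D π' π := by
    clear hπ
    induction hle with
    | refl => exact ⟨hπ', id, fun _ h => h, fun _ _ _ _ h => h, fun β _ => ⟨fun _ => 0, by simp⟩⟩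
    | tail _ hbc ih =>
      obtain ⟨⟨t, ht, rfl⟩, hl⟩ := hbc
      exact ⟨mul_mem (Subgroup.subset_closure ht) ih.1, ih.2.trans' (step D _ t ih.1 ht hl)⟩
  exact this.2
end

section
/- Let n ≥ 1 and 0 ≤ r ≤ n be integers. Let w_1 < w_2 < ⋯ < w_n be integers with 1 ≤ w_a ≤ 2n for all a and w_a + w_b ≠ 2n+1 for all a, b. Let K ⊆ {1, …, n} be a subset of size n−r, with increasing enumeration κ[1] < κ[2] < ⋯ < κ[n−r]. Then Σ_{j=1}^{n−r} (w_{κ[j]} − κ[j]) − #{(a,b) : 1 ≤ a < b ≤ n−r and w_{κ[a]} + w_{κ[b]} > 2n+1} = #{(a,b) : 1 ≤ a ≤ b ≤ n, w_a + w_b > 2n+1, and (a ∈ K or b ∈ K)}. -/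
theorem key_aux (n : ℕ) (w : ℕ → ℕ)
    (hwmono : ∀ a b, 1 ≤ a → a < b → b ≤ n → w a < w b)
    (hwlb : ∀ a, 1 ≤ a → a ≤ n → 1 ≤ w a)
    (hwub : ∀ a, 1 ≤ a → a ≤ n → w a ≤ 2 * n)
    (hwsum : ∀ a b, 1 ≤ a → a ≤ n → 1 ≤ b → b ≤ n → w a + w b ≠ 2 * n + 1)
    (k : ℕ) (hk1 : 1 ≤ k) (hkn : k ≤ n) :
    w k = k + ((Finset.Icc 1 n).filter (fun a => 2 * n + 1 < w a + w k)).card := by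
  have inj : ∀ a b, 1 ≤ a → a ≤ n → 1 ≤ b → b ≤ n → w a = w b → a = b := by
    intro a b ha ha' hb hb' h
    rcases lt_trichotomy a b with h1 | h1 | h1
    · have := hwmono a b ha h1 hb'; omega
    · exact h1
    · have := hwmono b a hb h1 ha'; omega
  have injI : Set.InjOn w (Finset.Icc 1 n : Finset ℕ) := by
    intro a ha b hb h
    simp only [Finset.coe_Icc, Set.mem_Icc] at ha hb
    exact inj a b ha.1 ha.2 hb.1 hb.2 h
  have injJ : Set.InjOn (fun a => 2 * n + 1 - w a) (Finset.Icc 1 n : Finset ℕ) := by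
    intro a ha b hb h
    simp only [Finset.coe_Icc, Set.mem_Icc] at ha hb h
    have := hwub a ha.1 ha.2
    have := hwub b hb.1 hb.2
    exact inj a b ha.1 ha.2 hb.1 hb.2 (by omega)
  have disj : Disjoint ((Finset.Icc 1 n).image w)
      ((Finset.Icc 1 n).image (fun a => 2 * n + 1 - w a)) := by
    rw [Finset.disjoint_left]
    intro v hv hv'
    simp only [Finset.mem_image, Finset.mem_Icc] at hv hv'
    obtain ⟨a, ha, rfl⟩ := hv
    obtain ⟨b, hb, h⟩ := hv'
    have := hwub b hb.1 hb.2
    have := hwsum a b ha.1 ha.2 hb.1 hb.2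
    omega
  have cover : (Finset.Icc 1 n).image w ∪ (Finset.Icc 1 n).image (fun a => 2 * n + 1 - w a)
      = Finset.Icc 1 (2 * n) := by
    apply Finset.eq_of_subset_of_card_le
    · intro v hv
      simp only [Finset.mem_union, Finset.mem_image, Finset.mem_Icc] at hv ⊢
      rcases hv with ⟨a, ha, rfl⟩ | ⟨a, ha, rfl⟩
      · exact ⟨hwlb a ha.1 ha.2, hwub a ha.1 ha.2⟩
      · have := hwlb a ha.1 ha.2
        have := hwub a ha.1 ha.2
        omega
    · rw [Finset.card_union_of_disjoint disj, Finset.card_image_of_injOn injI,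
        Finset.card_image_of_injOn injJ]
      simp only [Nat.card_Icc]
      omega
  have sub1 : Finset.Icc 1 k ⊆ Finset.Icc 1 n := Finset.Icc_subset_Icc_right hkn
  have sub2 : (Finset.Icc 1 n).filter (fun a => 2 * n + 1 < w a + w k) ⊆ Finset.Icc 1 n :=
    Finset.filter_subset _ _
  have split : Finset.Icc 1 (w k) = (Finset.Icc 1 k).image w ∪
      ((Finset.Icc 1 n).filter (fun a => 2 * n + 1 < w a + w k)).image
        (fun a => 2 * n + 1 - w a) := by
    ext v
    simp only [Finset.mem_union, Finset.mem_image, Finset.mem_Icc, Finset.mem_filter]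
    constructor
    · intro hv
      have hv2 : v ∈ Finset.Icc 1 (2 * n) := by
        have := hwub k hk1 hkn
        simp only [Finset.mem_Icc]; omega
      rw [← cover] at hv2
      simp only [Finset.mem_union, Finset.mem_image, Finset.mem_Icc] at hv2
      rcases hv2 with ⟨a, ha, rfl⟩ | ⟨a, ha, rfl⟩
      · left
        refine ⟨a, ⟨ha.1, ?_⟩, rfl⟩
        by_contra h
        have := hwmono k a hk1 (by omega) ha.2
        omega
      · right
        have := hwub a ha.1 ha.2
        have := hwsum a k ha.1 ha.2 hk1 hkn
        exact ⟨a, ⟨ha, by omega⟩, rfl⟩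
    · rintro (⟨a, ha, rfl⟩ | ⟨a, ⟨ha, h⟩, rfl⟩)
      · refine ⟨hwlb a ha.1 (by omega), ?_⟩
        rcases Nat.lt_or_ge a k with h | h
        · exact (hwmono a k ha.1 h hkn).le
        · have : a = k := by omega
          rw [this]
      · have := hwub a ha.1 ha.2
        omega
  have hc := congrArg Finset.card split
  rw [Finset.card_union_of_disjoint (Finset.disjoint_of_subset_left
      (Finset.image_subset_image sub1) (Finset.disjoint_of_subset_right
      (Finset.image_subset_image sub2) disj)),
    Finset.card_image_of_injOn (injI.mono (by exact_mod_cast sub1)),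
    Finset.card_image_of_injOn (injJ.mono (by exact_mod_cast sub2))] at hc
  simpa using hc

/-- The combinatorial identity for Schubert positions on the Lagrangian
Grassmannian `LG(n)`: for an admissible increasing sequence `w` and a subset `K` of
`{1, …, n}` of size `n - r` with increasing enumeration `κ`,
`∑_j (w_{κ[j]} - κ[j]) - #{a < b : w_{κ[a]} + w_{κ[b]} > 2n+1}`
equals the number of pairs `(a, b)` with `a ≤ b`, `w_a + w_b > 2n+1`, and `a ∈ K` or
`b ∈ K`. -/
theorem lagrangian_coinversion_identity (n r : ℕ) (hn : 1 ≤ n) (hr : r ≤ n)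
    (w : ℕ → ℕ)
    (hwmono : ∀ a b, 1 ≤ a → a < b → b ≤ n → w a < w b)
    (hwlb : ∀ a, 1 ≤ a → a ≤ n → 1 ≤ w a)
    (hwub : ∀ a, 1 ≤ a → a ≤ n → w a ≤ 2 * n)
    (hwsum : ∀ a b, 1 ≤ a → a ≤ n → 1 ≤ b → b ≤ n → w a + w b ≠ 2 * n + 1)
    (K : Finset ℕ) (hK : K ⊆ Finset.Icc 1 n) (hKcard : K.card = n - r)
    (κ : ℕ → ℕ)
    (hκmem : ∀ j, 1 ≤ j → j ≤ n - r → κ j ∈ K)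
    (hκmono : ∀ i j, 1 ≤ i → i < j → j ≤ n - r → κ i < κ j) :
    (∑ j ∈ Finset.Icc 1 (n - r), ((w (κ j) : ℤ) - (κ j : ℤ)))
      - (((Finset.Icc 1 (n - r) ×ˢ Finset.Icc 1 (n - r)).filter
            (fun p => p.1 < p.2 ∧ 2 * n + 1 < w (κ p.1) + w (κ p.2))).card : ℤ)
      = (((Finset.Icc 1 n ×ˢ Finset.Icc 1 n).filter
            (fun p => p.1 ≤ p.2 ∧ 2 * n + 1 < w p.1 + w p.2 ∧ (p.1 ∈ K ∨ p.2 ∈ K))).card : ℤ) := by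
  have hκinj : Set.InjOn κ (Finset.Icc 1 (n - r) : Finset ℕ) := by
    intro a ha b hb h
    simp only [Finset.coe_Icc, Set.mem_Icc] at ha hb
    rcases lt_trichotomy a b with h1 | h1 | h1
    · have := hκmono a b ha.1 h1 hb.2; omega
    · exact h1
    · have := hκmono b a hb.1 h1 ha.2; omega
  have hKim : (Finset.Icc 1 (n - r)).image κ = K := by
    apply Finset.eq_of_subset_of_card_le
    · intro v hv
      simp only [Finset.mem_image, Finset.mem_Icc] at hv
      obtain ⟨j, hj, rfl⟩ := hv
      exact hκmem j hj.1 hj.2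
    · rw [Finset.card_image_of_injOn hκinj, hKcard]; simp
  have toK : ∀ f : ℕ → ℤ, ∑ j ∈ Finset.Icc 1 (n - r), f (κ j)
      = ∑ a ∈ Finset.Icc 1 n, if a ∈ K then f a else 0 := by
    intro f
    rw [← Finset.sum_filter, Finset.filter_mem_eq_inter, Finset.inter_eq_right.mpr hK, ← hKim,
      Finset.sum_image hκinj]
  have e1 : (∑ j ∈ Finset.Icc 1 (n - r), ((w (κ j) : ℤ) - (κ j : ℤ)))
      = ∑ a ∈ Finset.Icc 1 n, ∑ b ∈ Finset.Icc 1 n,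
        if a ∈ K ∧ 2 * n + 1 < w b + w a then (1 : ℤ) else 0 := by
    rw [toK (fun a => (w a : ℤ) - a)]
    apply Finset.sum_congr rfl
    intro a ha
    simp only [Finset.mem_Icc] at ha
    by_cases h : a ∈ K
    · simp only [h, true_and, if_true]
      have := key_aux n w hwmono hwlb hwub hwsum a ha.1 ha.2
      rw [Finset.sum_boole]
      omega
    · simp [h]
  have e2 : (((Finset.Icc 1 (n - r) ×ˢ Finset.Icc 1 (n - r)).filter
            (fun p => p.1 < p.2 ∧ 2 * n + 1 < w (κ p.1) + w (κ p.2))).card : ℤ)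
      = ∑ a ∈ Finset.Icc 1 n, ∑ b ∈ Finset.Icc 1 n,
        if a ∈ K ∧ b ∈ K ∧ a < b ∧ 2 * n + 1 < w a + w b then (1 : ℤ) else 0 := by
    rw [← Finset.sum_boole, Finset.sum_product]
    have : ∀ i ∈ Finset.Icc 1 (n - r), (∑ j ∈ Finset.Icc 1 (n - r),
        if i < j ∧ 2 * n + 1 < w (κ i) + w (κ j) then (1 : ℤ) else 0)
        = ∑ b ∈ Finset.Icc 1 n, if b ∈ K then
          (if κ i < b ∧ 2 * n + 1 < w (κ i) + w b then (1 : ℤ) else 0) else 0 := by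
      intro i hi
      rw [← toK (fun b => if κ i < b ∧ 2 * n + 1 < w (κ i) + w b then (1 : ℤ) else 0)]
      apply Finset.sum_congr rfl
      intro j hj
      simp only [Finset.mem_Icc] at hi hj
      have : i < j ↔ κ i < κ j := by
        constructor
        · intro h; exact hκmono i j hi.1 h hj.2
        · intro h
          by_contra h'
          rcases Nat.lt_or_ge j i with h1 | h1
          · have := hκmono j i hj.1 h1 hi.2; omega
          · have : i = j := by omega
            subst this; omega
      simp only [this]
    rw [Finset.sum_congr rfl this, toK (fun a => ∑ b ∈ Finset.Icc 1 n, if b ∈ K then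
          (if a < b ∧ 2 * n + 1 < w a + w b then (1 : ℤ) else 0) else 0)]
    apply Finset.sum_congr rfl
    intro a _
    by_cases h : a ∈ K
    · simp only [h, true_and, if_true, ite_and]
    · simp [h]
  have e3 : (∑ a ∈ Finset.Icc 1 n, ∑ b ∈ Finset.Icc 1 n,
        if a ∈ K ∧ 2 * n + 1 < w b + w a then (1 : ℤ) else 0)
      = (∑ a ∈ Finset.Icc 1 n, ∑ b ∈ Finset.Icc 1 n,
        if a ≤ b ∧ a ∈ K ∧ 2 * n + 1 < w b + w a then (1 : ℤ) else 0)
      + ∑ a ∈ Finset.Icc 1 n, ∑ b ∈ Finset.Icc 1 n,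
        if a < b ∧ b ∈ K ∧ 2 * n + 1 < w a + w b then (1 : ℤ) else 0 := by
    rw [Finset.sum_comm (f := fun a b =>
      if a < b ∧ b ∈ K ∧ 2 * n + 1 < w a + w b then (1 : ℤ) else 0)]
    simp only [← Finset.sum_add_distrib]
    refine Finset.sum_congr rfl fun a _ => Finset.sum_congr rfl fun b _ => ?_
    rcases Nat.lt_or_ge b a with h | h
    · simp [h, Nat.not_le.mpr h]
    · simp [h, Nat.not_lt.mpr h]
  rw [e1, e2, e3, ← Finset.sum_boole, Finset.sum_product, sub_eq_iff_eq_add]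
  simp only [← Finset.sum_add_distrib]
  refine Finset.sum_congr rfl fun a _ => Finset.sum_congr rfl fun b _ => ?_
  rw [add_comm (w b) (w a)]
  by_cases hP : 2 * n + 1 < w a + w b
  · by_cases ha : a ∈ K <;> by_cases hb : b ∈ K <;> rcases lt_trichotomy a b with h | h | h <;>
      first
      | (subst h; simp_all)
      | simp [hP, ha, hb, h, h.le, Nat.not_le.mpr h, Nat.not_lt.mpr h.le]
  · simp [hP]
end
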